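/- The indifference premium H_t maps L^∞_T into L^∞_t with H_t(0) = 0 a.s., and it satisfies: (i) monotonicity: H_t(X) ≥ H_t(Y) a.s. whenever X, Y ∈ L^∞_T with X ≥ Y a.s.; (ii) convexity: H_t(aX + (1−a)Y) ≤ a H_t(X) + (1−a) H_t(Y) a.s. for X, Y ∈ L^∞_T and a ∈ (0,1); (iii) risk loading: H_t(Z) ≥ E[Z | 𝓕_t] a.s. for all Z ∈ L^∞_T; (iv) translation invariance: H_t(Z + C) = H_t(Z) + C a.s. for Z ∈ L^∞_T and C ∈ L^∞_t. -/

import Mathlib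

open MeasureTheory Filter

variable {Ω : Type*}

/-- `X ∈ L^∞(m)`: `m`-measurable and (essentially) bounded. -/
def MeasBdd (m : MeasurableSpace Ω) (X : Ω → ℝ) : Prop :=
  Measurable[m] X ∧ ∃ C : ℝ, ∀ ω, |X ω| ≤ C

/-- `u` is a utility function (strictly increasing, strictly concave, `C¹`) with
derivative `u'` satisfying `u 0 = 0`, `u' 0 = 1`, `u'(+∞) = 0`, `u'(-∞) = +∞`. -/
structure IsUtility (u u' : ℝ → ℝ) : Prop where
  strictMono : StrictMono u
  strictConcave : StrictConcaveOn ℝ Set.univ u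
  hasDeriv : ∀ x, HasDerivAt u (u' x) x
  derivCont : Continuous u'
  zero : u 0 = 0
  deriv_zero : u' 0 = 1
  deriv_top : Tendsto u' atTop (nhds 0)
  deriv_bot : Tendsto u' atBot atTop

/-- A diversification of `Z` at time `t`: an adapted family `(X i s)`,
`i = 1,…,n`, `s = t,…,T`, of essentially bounded random variables summing to `Z`. -/
def IsDiv {m0 : MeasurableSpace Ω} (P : Measure Ω) (ℱ : Filtration ℕ m0)
    (n t T : ℕ) (Z : Ω → ℝ) (X : ℕ → ℕ → Ω → ℝ) : Prop :=
  (∀ i ∈ Finset.Icc 1 n, ∀ s ∈ Finset.Icc t T, MeasBdd (ℱ s) (X i s)) ∧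
  ∀ᵐ ω ∂P, (∑ i ∈ Finset.Icc 1 n, ∑ s ∈ Finset.Icc t T, X i s ω) = Z ω

/-- The total conditional expected utility `∑_{i,s} E[u_{i,s}(X_{i,s}) | 𝓕_t]`. -/
noncomputable def utilSum {m0 : MeasurableSpace Ω} (P : Measure Ω) (ℱ : Filtration ℕ m0)
    (u : ℕ → ℕ → ℝ → ℝ) (n t T : ℕ) (X : ℕ → ℕ → Ω → ℝ) : Ω → ℝ :=
  fun ω => ∑ i ∈ Finset.Icc 1 n, ∑ s ∈ Finset.Icc t T,
    (P[fun ω' => u i s (X i s ω') | ℱ t]) ω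

/-- `g` is an essential supremum of the family `S` of random variables under `P`. -/
def IsEssSupOf {m0 : MeasurableSpace Ω} (P : Measure Ω) (S : Set (Ω → ℝ)) (g : Ω → ℝ) : Prop :=
  (∀ f ∈ S, f ≤ᵐ[P] g) ∧ ∀ h : Ω → ℝ, (∀ f ∈ S, f ≤ᵐ[P] h) → g ≤ᵐ[P] h

/-- `g` is an essential infimum of the family `S` of random variables under `P`. -/
def IsEssInfOf {m0 : MeasurableSpace Ω} (P : Measure Ω) (S : Set (Ω → ℝ)) (g : Ω → ℝ) : Prop :=
  (∀ f ∈ S, g ≤ᵐ[P] f) ∧ ∀ h : Ω → ℝ, (∀ f ∈ S, h ≤ᵐ[P] f) → h ≤ᵐ[P] g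

/-!
The conditional utility `U_t` is monotone, concave, nonnegative at `0`, and dominated by the
conditional expectation because `u x ≤ u 0 + u' 0 * x = x`. These four facts alone yield the
theorem: monotonicity, convexity and translation invariance hold already for the sets of acceptable
premiums whose essential infimum is `H_t`, and an acceptable `K` satisfies
`0 ≤ U_t(0) ≤ U_t(K - Z) ≤ K - E[Z | 𝓕_t]`.

For the `𝓕_t`-measurability of `H_t(Z)`, an integrable essential infimum `g` of `𝓕_t`-measurable
functions `K` has `E[g | 𝓕_t] ≤ E[K | 𝓕_t] = K`, so `E[g | 𝓕_t] ≤ g`, with equality since the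
integrals agree. An essential infimum is not measurable by definition; that it is integrable follows
by comparing it with its smallest measurable majorant.
-/

section

open scoped Pointwise

theorem eventuallyLE_sum {α ι M : Type*} [AddCommMonoid M] [PartialOrder M]
    [IsOrderedAddMonoid M] {l : Filter α} {I : Finset ι} {f g : ι → α → M}
    (h : ∀ i ∈ I, f i ≤ᶠ[l] g i) : ∑ i ∈ I, f i ≤ᶠ[l] ∑ i ∈ I, g i := by
  filter_upwards [(eventually_all_finset I).2 h] with ω hω
  simpa only [Finset.sum_apply] using Finset.sum_le_sum hω

variable {m m' m0 : MeasurableSpace Ω} {P : Measure Ω}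

theorem smul_condExp_comp_add_le {φ : ℝ → ℝ} (hφ : ConcaveOn ℝ Set.univ φ) {X Y : Ω → ℝ}
    {a b : ℝ} (ha : 0 ≤ a) (hb : 0 ≤ b) (hab : a + b = 1) (hX : Integrable (φ ∘ X) P)
    (hY : Integrable (φ ∘ Y) P) (hXY : Integrable (φ ∘ (a • X + b • Y)) P) :
    a • P[φ ∘ X | m] + b • P[φ ∘ Y | m] ≤ᵐ[P] P[φ ∘ (a • X + b • Y) | m] :=
  calc a • P[φ ∘ X | m] + b • P[φ ∘ Y | m]
      =ᵐ[P] P[a • (φ ∘ X) | m] + P[b • (φ ∘ Y) | m] :=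
        ((condExp_smul a _ m).add (condExp_smul b _ m)).symm
    _ =ᵐ[P] P[a • (φ ∘ X) + b • (φ ∘ Y) | m] :=
        (condExp_add (hX.smul a) (hY.smul b) m).symm
    _ ≤ᵐ[P] P[φ ∘ (a • X + b • Y) | m] :=
        condExp_mono ((hX.smul a).add (hY.smul b)) hXY <| .of_forall fun ω =>
          hφ.2 (Set.mem_univ (X ω)) (Set.mem_univ (Y ω)) ha hb hab

theorem exists_greatest_measurable_minorant {f : Ω → ENNReal} (hf : ∫⁻ ω, f ω ∂P ≠ ⊤) :
    ∃ w, Measurable w ∧ w ≤ f ∧ ∀ h, AEMeasurable h P → h ≤ᵐ[P] f → h ≤ᵐ[P] w := by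
  -- `∫⁻` is a lower integral, so some measurable minorant attains it.
  obtain ⟨w, hw, hwf, hint⟩ := exists_measurable_le_lintegral_eq P f
  refine ⟨w, hw, hwf, fun h hh hhf => ?_⟩
  have hsup : w =ᵐ[P] w ⊔ h := by
    refine ae_eq_of_ae_le_of_lintegral_le (.of_forall fun _ => le_sup_left) (hint ▸ hf)
      (hw.aemeasurable.sup hh) ?_
    rw [← hint]
    refine lintegral_mono_ae ?_
    filter_upwards [hhf] with ω hω using sup_le (hwf ω) hω
  filter_upwards [hsup] with ω hω
  exact hω ▸ le_sup_right

namespace MeasBdd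

variable {X Y : Ω → ℝ}

theorem const (c : ℝ) : MeasBdd m fun _ => c :=
  ⟨measurable_const, |c|, fun _ => le_rfl⟩

theorem zero : MeasBdd m 0 :=
  const 0

theorem mono (hm : m ≤ m') (hX : MeasBdd m X) : MeasBdd m' X :=
  ⟨hX.1.mono hm le_rfl, hX.2⟩

theorem add (hX : MeasBdd m X) (hY : MeasBdd m Y) : MeasBdd m (X + Y) := by
  obtain ⟨hXm, C, hC⟩ := hX
  obtain ⟨hYm, D, hD⟩ := hY
  exact ⟨hXm.add hYm, C + D, fun ω => (abs_add_le _ _).trans (add_le_add (hC ω) (hD ω))⟩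

theorem smul (a : ℝ) (hX : MeasBdd m X) : MeasBdd m (a • X) := by
  obtain ⟨hXm, C, hC⟩ := hX
  refine ⟨hXm.const_smul a, |a| * C, fun ω => ?_⟩
  rw [Pi.smul_apply, smul_eq_mul, abs_mul]
  exact mul_le_mul_of_nonneg_left (hC ω) (abs_nonneg a)

theorem sub (hX : MeasBdd m X) (hY : MeasBdd m Y) : MeasBdd m (X - Y) := by
  simpa only [neg_one_smul, sub_eq_add_neg] using hX.add (hY.smul (-1))

theorem monotone_comp {φ : ℝ → ℝ} (hφ : Monotone φ) (hX : MeasBdd m X) : MeasBdd m (φ ∘ X) := by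
  obtain ⟨hXm, C, hC⟩ := hX
  refine ⟨hφ.measurable.comp hXm, max |φ (-C)| |φ C|, fun ω => ?_⟩
  obtain ⟨hl, hr⟩ := abs_le.1 (hC ω)
  exact abs_le_max_abs_abs (hφ hl) (hφ hr)

theorem integrable [IsFiniteMeasure P] (hm : m ≤ m0) (hX : MeasBdd m X) : Integrable X P := by
  obtain ⟨hXm, C, hC⟩ := hX
  exact .of_bound (hXm.mono hm le_rfl).aestronglyMeasurable C (.of_forall hC)

theorem condExp_eq_self [IsFiniteMeasure P] (hm : m ≤ m0) (hX : MeasBdd m X) : P[X | m] = X :=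
  condExp_of_stronglyMeasurable hm hX.1.stronglyMeasurable (hX.integrable hm)

theorem exists_ae_eq (hX : Measurable[m] X) {C : ℝ} (hC : ∀ᵐ ω ∂P, |X ω| ≤ C) :
    ∃ V, MeasBdd m V ∧ X =ᵐ[P] V := by
  refine ⟨fun ω => max (-|C|) (min |C| (X ω)),
    ⟨measurable_const.max (measurable_const.min hX), |C|, fun ω => abs_le.2
      ⟨le_max_left _ _, max_le (neg_le_self (abs_nonneg C)) (min_le_left _ _)⟩⟩, ?_⟩
  filter_upwards [hC] with ω hω
  obtain ⟨hl, hr⟩ := abs_le.1 (hω.trans (le_abs_self C))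
  rw [min_eq_right hr, max_eq_right hl]

end MeasBdd

namespace IsEssSupOf

variable {S S' : Set (Ω → ℝ)} {f g : Ω → ℝ}

theorem add (hf : IsEssSupOf P S f) (hg : IsEssSupOf P S' g) :
    IsEssSupOf P (S + S') (f + g) := by
  refine ⟨?_, fun h hh => ?_⟩
  · rintro _ ⟨x, hx, y, hy, rfl⟩
    exact (hf.1 x hx).add_le_add (hg.1 y hy)
  · have hfy (y) (hy : y ∈ S') : f ≤ᵐ[P] h - y := hf.2 _ fun x hx => by
      filter_upwards [hh _ (Set.add_mem_add hx hy)] with ω hω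
      exact le_sub_iff_add_le.2 hω
    have hgf : g ≤ᵐ[P] h - f := hg.2 _ fun y hy => by
      filter_upwards [hfy y hy] with ω hω
      exact le_sub_comm.1 hω
    filter_upwards [hgf] with ω hω
    exact le_sub_iff_add_le'.1 hω

theorem smul {a : ℝ} (ha : 0 < a) (hg : IsEssSupOf P S g) : IsEssSupOf P (a • S) (a • g) := by
  refine ⟨?_, fun h hh => ?_⟩
  · rintro _ ⟨x, hx, rfl⟩
    filter_upwards [hg.1 x hx] with ω hω
    exact smul_le_smul_of_nonneg_left hω ha.le
  · have hgh : g ≤ᵐ[P] a⁻¹ • h := hg.2 _ fun x hx => by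
      filter_upwards [hh _ (Set.smul_mem_smul_set hx)] with ω hω
      exact (le_inv_smul_iff_of_pos ha).2 hω
    filter_upwards [hgh] with ω hω
    exact (le_inv_smul_iff_of_pos ha).1 hω

end IsEssSupOf

theorem isEssInfOf_iff_isEssSupOf_neg {S : Set (Ω → ℝ)} {g : Ω → ℝ} :
    IsEssInfOf P S g ↔ IsEssSupOf P (-S) (-g) := by
  have neg_le_iff (f f' : Ω → ℝ) : -f ≤ᵐ[P] f' ↔ -f' ≤ᵐ[P] f :=
    eventually_congr (.of_forall fun _ => neg_le)
  have forall_neg_le_iff (h : Ω → ℝ) : (∀ f ∈ -S, f ≤ᵐ[P] h) ↔ ∀ f ∈ S, -h ≤ᵐ[P] f :=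
    ⟨fun hh f hf => (neg_le_iff _ _).1 (hh (-f) (Set.neg_mem_neg.2 hf)),
      fun hh f hf => neg_neg f ▸ (neg_le_iff _ _).1 (hh (-f) hf)⟩
  unfold IsEssInfOf IsEssSupOf
  simp only [forall_neg_le_iff, neg_neg]
  refine and_congr_right' ⟨fun hh h hS => (neg_le_iff _ _).1 (hh (-h) hS), fun hh h hS => ?_⟩
  exact neg_neg h ▸ (neg_le_iff _ _).1 (hh (-h) (by rwa [neg_neg]))

namespace IsEssInfOf

variable {S S' : Set (Ω → ℝ)} {f g : Ω → ℝ}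

theorem ae_le_of_subset (hf : IsEssInfOf P S f) (hg : IsEssInfOf P S' g) (h : S ⊆ S') :
    g ≤ᵐ[P] f :=
  hf.2 g fun x hx => hg.1 x (h hx)

theorem ae_eq (hf : IsEssInfOf P S f) (hg : IsEssInfOf P S g) : f =ᵐ[P] g :=
  (hg.ae_le_of_subset hf subset_rfl).antisymm (hf.ae_le_of_subset hg subset_rfl)

theorem singleton : IsEssInfOf P {g} g :=
  ⟨fun _ hf => hf ▸ EventuallyLE.rfl, fun _ hh => hh g rfl⟩

theorem add (hf : IsEssInfOf P S f) (hg : IsEssInfOf P S' g) :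
    IsEssInfOf P (S + S') (f + g) := by
  rw [isEssInfOf_iff_isEssSupOf_neg] at hf hg ⊢
  simpa only [neg_add] using hf.add hg

theorem smul {a : ℝ} (ha : 0 < a) (hg : IsEssInfOf P S g) : IsEssInfOf P (a • S) (a • g) := by
  rw [isEssInfOf_iff_isEssSupOf_neg] at hg ⊢
  simpa only [Set.smul_set_neg, smul_neg] using hg.smul ha

theorem aemeasurable_of_bound [IsFiniteMeasure P] (hg : IsEssInfOf P S g)
    (hS : ∀ f ∈ S, AEMeasurable f P) {C : ℝ} (hC : ∀ᵐ ω ∂P, |g ω| ≤ C) : AEMeasurable g P := by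
  have hfin : ∫⁻ ω, ENNReal.ofReal (C - g ω) ∂P ≠ ⊤ := by
    refine ((lintegral_mono_ae (g := fun _ => ENNReal.ofReal (2 * C)) ?_).trans_lt ?_).ne
    · filter_upwards [hC] with ω hω
      exact ENNReal.ofReal_le_ofReal (by linarith [(abs_le.1 hω).1])
    · rw [lintegral_const]
      exact ENNReal.mul_lt_top ENNReal.ofReal_lt_top (measure_lt_top P Set.univ)
  obtain ⟨w, hw, hwle, hgreatest⟩ := exists_greatest_measurable_minorant hfin
  have hle : (fun ω => C - (w ω).toReal) ≤ᵐ[P] g := hg.2 _ fun f hf => by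
    have hfw : (fun ω => ENNReal.ofReal (C - f ω)) ≤ᵐ[P] w := by
      refine hgreatest _ ((hS f hf).const_sub C).ennreal_ofReal ?_
      filter_upwards [hg.1 f hf] with ω hω
      exact ENNReal.ofReal_le_ofReal (sub_le_sub_left hω C)
    filter_upwards [hfw] with ω hω
    have hwtop : w ω ≠ ⊤ := ne_top_of_le_ne_top ENNReal.ofReal_ne_top (hwle ω)
    exact sub_le_comm.1 ((ENNReal.ofReal_le_iff_le_toReal hwtop).1 hω)
  have hge : g ≤ᵐ[P] fun ω => C - (w ω).toReal := by
    filter_upwards [hC] with ω hω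
    exact le_sub_comm.1
      (ENNReal.toReal_le_of_le_ofReal (sub_nonneg.2 (abs_le.1 hω).2) (hwle ω))
  exact ⟨_, measurable_const.sub hw.ennreal_toReal, hge.antisymm hle⟩

theorem condExp_ae_eq_self (hm : m ≤ m0) [SigmaFinite (P.trim hm)] (hg : IsEssInfOf P S g)
    (hgi : Integrable g P) (hS : ∀ f ∈ S, StronglyMeasurable[m] f) (hSi : ∀ f ∈ S, Integrable f P) :
    P[g | m] =ᵐ[P] g := by
  have hle : P[g | m] ≤ᵐ[P] g := hg.2 _ fun f hf => by
    rw [← condExp_of_stronglyMeasurable hm (hS f hf) (hSi f hf)]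
    exact condExp_mono hgi (hSi f hf) (hg.1 f hf)
  exact (integral_eq_iff_of_ae_le integrable_condExp hgi hle).1 (integral_condExp hm)

theorem exists_measBdd_ae_eq [IsFiniteMeasure P] (hm : m ≤ m0) (hg : IsEssInfOf P S g)
    (hS : ∀ f ∈ S, MeasBdd m f) {C : ℝ} (hC : ∀ᵐ ω ∂P, |g ω| ≤ C) :
    ∃ V, MeasBdd m V ∧ g =ᵐ[P] V := by
  have hgi : Integrable g P :=
    .of_bound (hg.aemeasurable_of_bound
      (fun f hf => ((hS f hf).1.mono hm le_rfl).aemeasurable) hC).aestronglyMeasurable C hC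
  have hcond : P[g | m] =ᵐ[P] g := hg.condExp_ae_eq_self hm hgi
    (fun f hf => (hS f hf).1.stronglyMeasurable) fun f hf => (hS f hf).integrable hm
  obtain ⟨V, hV, hgV⟩ := MeasBdd.exists_ae_eq (P := P) (C := C)
    (stronglyMeasurable_condExp (f := g) (m := m) (μ := P)).measurable
    (by filter_upwards [hC, hcond] with ω hω heq using heq ▸ hω)
  exact ⟨V, hV, hcond.symm.trans hgV⟩

end IsEssInfOf

/-- A conditional utility functional on `L^∞(m')` given the information `m`: monotone, concave,
dominated by the conditional expectation and nonnegative at `0`. These are the properties of `U_t`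
from which those of the indifference premium follow. -/
structure IsConditionalUtility (P : Measure Ω) (m m' : MeasurableSpace Ω)
    (U : (Ω → ℝ) → Ω → ℝ) : Prop where
  mono : ∀ ⦃X Y⦄, MeasBdd m' X → MeasBdd m' Y → X ≤ᵐ[P] Y → U X ≤ᵐ[P] U Y
  concave : ∀ ⦃X Y⦄ ⦃a b : ℝ⦄, MeasBdd m' X → MeasBdd m' Y → 0 < a → 0 < b → a + b = 1 →
    a • U X + b • U Y ≤ᵐ[P] U (a • X + b • Y)
  le_condExp : ∀ ⦃Z⦄, MeasBdd m' Z → U Z ≤ᵐ[P] P[Z | m]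
  zero_le : 0 ≤ᵐ[P] U 0

/-- The premiums `K ∈ L^∞(m)` for which covering the loss `Z` is at least as good as doing
nothing. -/
def acceptablePremiums (P : Measure Ω) (m : MeasurableSpace Ω) (U : (Ω → ℝ) → Ω → ℝ)
    (Z : Ω → ℝ) : Set (Ω → ℝ) :=
  {K | MeasBdd m K ∧ U 0 ≤ᵐ[P] U (K - Z)}

/-- `H` is a version of the indifference premium of `U`: on `L^∞(m')` it is the essential infimum
of the acceptable premiums. -/
def IsIndifferencePremium (P : Measure Ω) (m m' : MeasurableSpace Ω)
    (U H : (Ω → ℝ) → Ω → ℝ) : Prop :=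
  ∀ Z, MeasBdd m' Z → IsEssInfOf P (acceptablePremiums P m U Z) (H Z)

section AcceptablePremiums

variable {U : (Ω → ℝ) → Ω → ℝ} {X Y Z C K : Ω → ℝ}

theorem zero_mem_acceptablePremiums_zero : 0 ∈ acceptablePremiums P m U 0 :=
  ⟨.zero, by rw [sub_zero]⟩

theorem acceptablePremiums_add (hC : MeasBdd m C) :
    acceptablePremiums P m U (Z + C) = acceptablePremiums P m U Z + {C} := by
  ext K
  rw [Set.add_singleton, Set.mem_image]
  refine ⟨fun ⟨hK, hKU⟩ => ⟨K - C, ⟨hK.sub hC, ?_⟩, sub_add_cancel K C⟩, ?_⟩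
  · rwa [sub_sub, add_comm C Z]
  · rintro ⟨L, ⟨hL, hLU⟩, rfl⟩
    exact ⟨hL.add hC, by rwa [add_sub_add_right_eq_sub]⟩

namespace IsConditionalUtility

theorem acceptablePremiums_anti (hU : IsConditionalUtility P m m' U) (hm : m ≤ m')
    (hX : MeasBdd m' X) (hY : MeasBdd m' Y) (hYX : Y ≤ᵐ[P] X) :
    acceptablePremiums P m U X ⊆ acceptablePremiums P m U Y := by
  rintro K ⟨hK, hKU⟩
  refine ⟨hK, hKU.trans (hU.mono ((hK.mono hm).sub hX) ((hK.mono hm).sub hY) ?_)⟩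
  filter_upwards [hYX] with ω hω using sub_le_sub_left hω _

theorem smul_acceptablePremiums_add_subset (hU : IsConditionalUtility P m m' U) (hm : m ≤ m')
    (hX : MeasBdd m' X) (hY : MeasBdd m' Y) {a b : ℝ} (ha : 0 < a) (hb : 0 < b)
    (hab : a + b = 1) :
    a • acceptablePremiums P m U X + b • acceptablePremiums P m U Y ⊆
      acceptablePremiums P m U (a • X + b • Y) := by
  rintro _ ⟨_, ⟨K, ⟨hK, hKU⟩, rfl⟩, _, ⟨L, ⟨hL, hLU⟩, rfl⟩, rfl⟩
  refine ⟨(hK.smul a).add (hL.smul b), ?_⟩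
  calc U 0 = a • U 0 + b • U 0 := by rw [← add_smul, hab, one_smul]
    _ ≤ᵐ[P] a • U (K - X) + b • U (L - Y) := by
      filter_upwards [hKU, hLU] with ω hKω hLω
      exact add_le_add (smul_le_smul_of_nonneg_left hKω ha.le)
        (smul_le_smul_of_nonneg_left hLω hb.le)
    _ ≤ᵐ[P] U (a • (K - X) + b • (L - Y)) :=
      hU.concave ((hK.mono hm).sub hX) ((hL.mono hm).sub hY) ha hb hab
    _ = U (a • K + b • L - (a • X + b • Y)) := by rw [smul_sub, smul_sub, add_sub_add_comm]

theorem condExp_le_of_mem_acceptablePremiums [IsFiniteMeasure P]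
    (hU : IsConditionalUtility P m m' U) (hm : m ≤ m') (hm' : m' ≤ m0) (hZ : MeasBdd m' Z)
    (hK : K ∈ acceptablePremiums P m U Z) : P[Z | m] ≤ᵐ[P] K := by
  obtain ⟨hKb, hKU⟩ := hK
  have hnonneg : 0 ≤ᵐ[P] K - P[Z | m] :=
    calc 0 ≤ᵐ[P] U 0 := hU.zero_le
      _ ≤ᵐ[P] U (K - Z) := hKU
      _ ≤ᵐ[P] P[K - Z | m] := hU.le_condExp ((hKb.mono hm).sub hZ)
      _ =ᵐ[P] P[K | m] - P[Z | m] :=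
        condExp_sub (hKb.integrable (hm.trans hm')) (hZ.integrable hm') m
      _ = K - P[Z | m] := by rw [hKb.condExp_eq_self (hm.trans hm')]
  filter_upwards [hnonneg] with ω hω using sub_nonneg.1 hω

end IsConditionalUtility

end AcceptablePremiums

namespace IsIndifferencePremium

variable {U H : (Ω → ℝ) → Ω → ℝ} {X Y Z C : Ω → ℝ}

theorem mono (hH : IsIndifferencePremium P m m' U H) (hU : IsConditionalUtility P m m' U)
    (hm : m ≤ m') (hX : MeasBdd m' X) (hY : MeasBdd m' Y) (hYX : Y ≤ᵐ[P] X) :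
    H Y ≤ᵐ[P] H X :=
  (hH X hX).ae_le_of_subset (hH Y hY) (hU.acceptablePremiums_anti hm hX hY hYX)

theorem convex (hH : IsIndifferencePremium P m m' U H) (hU : IsConditionalUtility P m m' U)
    (hm : m ≤ m') (hX : MeasBdd m' X) (hY : MeasBdd m' Y) {a b : ℝ} (ha : 0 < a) (hb : 0 < b)
    (hab : a + b = 1) : H (a • X + b • Y) ≤ᵐ[P] a • H X + b • H Y :=
  (((hH X hX).smul ha).add ((hH Y hY).smul hb)).ae_le_of_subset
    (hH _ ((hX.smul a).add (hY.smul b)))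
    (hU.smul_acceptablePremiums_add_subset hm hX hY ha hb hab)

theorem condExp_le [IsFiniteMeasure P] (hH : IsIndifferencePremium P m m' U H)
    (hU : IsConditionalUtility P m m' U) (hm : m ≤ m') (hm' : m' ≤ m0) (hZ : MeasBdd m' Z) :
    P[Z | m] ≤ᵐ[P] H Z :=
  (hH Z hZ).2 _ fun _ hK => hU.condExp_le_of_mem_acceptablePremiums hm hm' hZ hK

theorem add_right (hH : IsIndifferencePremium P m m' U H) (hm : m ≤ m') (hZ : MeasBdd m' Z)
    (hC : MeasBdd m C) : H (Z + C) =ᵐ[P] H Z + C := by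
  have hZC := hH (Z + C) (hZ.add (hC.mono hm))
  rw [acceptablePremiums_add hC] at hZC
  exact hZC.ae_eq ((hH Z hZ).add .singleton)

theorem zero [IsFiniteMeasure P] (hH : IsIndifferencePremium P m m' U H)
    (hU : IsConditionalUtility P m m' U) (hm : m ≤ m') (hm' : m' ≤ m0) : H 0 =ᵐ[P] 0 := by
  refine ((hH 0 .zero).1 0 zero_mem_acceptablePremiums_zero).antisymm ?_
  simpa only [condExp_zero] using hH.condExp_le hU hm hm' .zero

theorem const [IsFiniteMeasure P] (hH : IsIndifferencePremium P m m' U H)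
    (hU : IsConditionalUtility P m m' U) (hm : m ≤ m') (hm' : m' ≤ m0) (c : ℝ) :
    H (fun _ => c) =ᵐ[P] fun _ => c := by
  have hadd := hH.add_right hm .zero (.const c)
  rw [zero_add] at hadd
  filter_upwards [hadd, hH.zero hU hm hm'] with ω hω hzero
  rw [hω, Pi.add_apply, hzero, Pi.zero_apply, zero_add]

theorem abs_le_of_abs_le [IsFiniteMeasure P] (hH : IsIndifferencePremium P m m' U H)
    (hU : IsConditionalUtility P m m' U) (hm : m ≤ m') (hm' : m' ≤ m0) (hZ : MeasBdd m' Z)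
    {c : ℝ} (hc : ∀ᵐ ω ∂P, |Z ω| ≤ c) : ∀ᵐ ω ∂P, |H Z ω| ≤ c := by
  have hle : H Z ≤ᵐ[P] H fun _ => c :=
    hH.mono hU hm (.const c) hZ (hc.mono fun _ h => (abs_le.1 h).2)
  have hge : H (fun _ => -c) ≤ᵐ[P] H Z :=
    hH.mono hU hm hZ (.const (-c)) (hc.mono fun _ h => (abs_le.1 h).1)
  filter_upwards [hle, hge, hH.const hU hm hm' c, hH.const hU hm hm' (-c)] with
    ω hleω hgeω hcω hnegcω
  exact abs_le.2 ⟨hnegcω ▸ hgeω, hcω ▸ hleω⟩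

theorem exists_measBdd_ae_eq [IsFiniteMeasure P] (hH : IsIndifferencePremium P m m' U H)
    (hU : IsConditionalUtility P m m' U) (hm : m ≤ m') (hm' : m' ≤ m0) (hZ : MeasBdd m' Z) :
    ∃ V, MeasBdd m V ∧ H Z =ᵐ[P] V :=
  have ⟨_, hc⟩ := hZ.2
  (hH Z hZ).exists_measBdd_ae_eq (hm.trans hm') (fun _ hK => hK.1)
    (hH.abs_le_of_abs_le hU hm hm' hZ (.of_forall hc))

end IsIndifferencePremium

/-- A nondecreasing concave utility function, normalised so that the identity is a supporting line
at `0`. -/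
structure IsConcaveUtility (u : ℝ → ℝ) : Prop where
  monotone : Monotone u
  concaveOn : ConcaveOn ℝ Set.univ u
  zero : u 0 = 0
  le_self : ∀ x, u x ≤ x

theorem IsUtility.le_self {u u' : ℝ → ℝ} (hu : IsUtility u u') (x : ℝ) : u x ≤ x := by
  have hconc := hu.strictConcave.concaveOn
  have hderiv : HasDerivAt u 1 0 := hu.deriv_zero ▸ hu.hasDeriv 0
  rcases lt_trichotomy x 0 with hx | rfl | hx
  · have hslope := hconc.le_slope_of_hasDerivAt (Set.mem_univ x) (Set.mem_univ 0) hx hderiv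
    rw [slope_def_field, hu.zero, le_div_iff₀ (by linarith)] at hslope
    linarith
  · exact hu.zero.le
  · have hslope := hconc.slope_le_of_hasDerivAt (Set.mem_univ 0) (Set.mem_univ x) hx hderiv
    rw [slope_def_field, hu.zero, div_le_iff₀ (by linarith)] at hslope
    linarith

theorem IsUtility.isConcaveUtility {u u' : ℝ → ℝ} (hu : IsUtility u u') : IsConcaveUtility u :=
  ⟨hu.strictMono.monotone, hu.strictConcave.concaveOn, hu.zero, hu.le_self⟩

/-- The utilities `∑ E[u_{i,s}(X_{i,s}) | 𝓕_t]` attained by the diversifications `X` of `Z`; their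
essential supremum is `U_t(Z)`. -/
def attainableUtilities (P : Measure Ω) (ℱ : Filtration ℕ m0) (u : ℕ → ℕ → ℝ → ℝ) (n t T : ℕ)
    (Z : Ω → ℝ) : Set (Ω → ℝ) :=
  {g | ∃ X : ℕ → ℕ → Ω → ℝ, IsDiv P ℱ n t T Z X ∧ g = utilSum P ℱ u n t T X}

variable {ℱ : Filtration ℕ m0} {u v : ℕ → ℕ → ℝ → ℝ} {n t T : ℕ}

theorem isDiv_zero : IsDiv P ℱ n t T 0 0 :=
  ⟨fun _ _ _ _ => .zero, by simp⟩

theorem isDiv_single (hn : 0 < n) (ht : t ≤ T) {Z : Ω → ℝ} (hZ : MeasBdd (ℱ T) Z) :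
    IsDiv P ℱ n t T Z (Pi.single 1 (Pi.single T Z)) := by
  refine ⟨fun i _ s _ => ?_, .of_forall fun ω => ?_⟩
  · obtain rfl | hi := eq_or_ne i 1
    · obtain rfl | hs := eq_or_ne s T
      · simpa only [Pi.single_eq_same] using hZ
      · simpa only [Pi.single_eq_same, Pi.single_eq_of_ne hs] using MeasBdd.zero
    · simpa only [Pi.single_eq_of_ne hi, Pi.zero_apply] using MeasBdd.zero
  · rw [Finset.sum_eq_single_of_mem 1 (Finset.mem_Icc.2 ⟨le_rfl, hn⟩),
      Finset.sum_eq_single_of_mem T (Finset.mem_Icc.2 ⟨ht, le_rfl⟩)]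
    · simp only [Pi.single_eq_same]
    · intro s _ hs
      simp only [Pi.single_eq_same, Pi.single_eq_of_ne hs, Pi.zero_apply]
    · intro i _ hi
      simp only [Pi.single_eq_of_ne hi, Pi.zero_apply, Finset.sum_const_zero]

namespace IsDiv

variable {Z W : Ω → ℝ} {X Y : ℕ → ℕ → Ω → ℝ}

theorem add (hX : IsDiv P ℱ n t T Z X) (hY : IsDiv P ℱ n t T W Y) :
    IsDiv P ℱ n t T (Z + W) (X + Y) := by
  refine ⟨fun i hi s hs => (hX.1 i hi s hs).add (hY.1 i hi s hs), ?_⟩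
  filter_upwards [hX.2, hY.2] with ω hXω hYω
  simp only [Pi.add_apply, Finset.sum_add_distrib, hXω, hYω]

theorem smul (a : ℝ) (hX : IsDiv P ℱ n t T Z X) : IsDiv P ℱ n t T (a • Z) (a • X) := by
  refine ⟨fun i hi s hs => (hX.1 i hi s hs).smul a, ?_⟩
  filter_upwards [hX.2] with ω hXω
  simp only [Pi.smul_apply, ← Finset.smul_sum, hXω]

theorem integrable [IsFiniteMeasure P] (hX : IsDiv P ℱ n t T Z X) {i s : ℕ}
    (hi : i ∈ Finset.Icc 1 n) (hs : s ∈ Finset.Icc t T) : Integrable (X i s) P :=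
  (hX.1 i hi s hs).integrable (ℱ.le s)

theorem integrable_comp [IsFiniteMeasure P] {φ : ℝ → ℝ} (hφ : Monotone φ)
    (hX : IsDiv P ℱ n t T Z X) {i s : ℕ} (hi : i ∈ Finset.Icc 1 n) (hs : s ∈ Finset.Icc t T) :
    Integrable (φ ∘ X i s) P :=
  ((hX.1 i hi s hs).monotone_comp hφ).integrable (ℱ.le s)

end IsDiv

variable {Z W : Ω → ℝ} {X Y : ℕ → ℕ → Ω → ℝ}

theorem utilSum_eq_sum_product : utilSum P ℱ u n t T X =
    ∑ p ∈ Finset.Icc 1 n ×ˢ Finset.Icc t T, P[u p.1 p.2 ∘ X p.1 p.2 | ℱ t] := by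
  ext ω
  rw [Finset.sum_apply, Finset.sum_product]
  rfl

theorem utilSum_zero (hu : ∀ i s, u i s 0 = 0) :
    utilSum P ℱ u n t T 0 = 0 := by
  rw [utilSum_eq_sum_product]
  refine Finset.sum_eq_zero fun p _ => ?_
  have hcomp : u p.1 p.2 ∘ (0 : Ω → ℝ) = 0 := funext fun _ => hu p.1 p.2
  exact (congrArg (fun f => P[f | ℱ t]) hcomp).trans condExp_zero

theorem utilSum_le_utilSum
    (hX : ∀ i ∈ Finset.Icc 1 n, ∀ s ∈ Finset.Icc t T, Integrable (u i s ∘ X i s) P)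
    (hY : ∀ i ∈ Finset.Icc 1 n, ∀ s ∈ Finset.Icc t T, Integrable (v i s ∘ Y i s) P)
    (h : ∀ i ∈ Finset.Icc 1 n, ∀ s ∈ Finset.Icc t T, u i s ∘ X i s ≤ᵐ[P] v i s ∘ Y i s) :
    utilSum P ℱ u n t T X ≤ᵐ[P] utilSum P ℱ v n t T Y := by
  rw [utilSum_eq_sum_product, utilSum_eq_sum_product]
  refine eventuallyLE_sum fun p hp => ?_
  obtain ⟨hi, hs⟩ := Finset.mem_product.1 hp
  exact condExp_mono (hX _ hi _ hs) (hY _ hi _ hs) (h _ hi _ hs)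

theorem utilSum_id_ae_eq_condExp [IsFiniteMeasure P] (hX : IsDiv P ℱ n t T Z X) :
    utilSum P ℱ (fun _ _ => id) n t T X =ᵐ[P] P[Z | ℱ t] := by
  rw [utilSum_eq_sum_product]
  have hint (p) (hp : p ∈ Finset.Icc 1 n ×ˢ Finset.Icc t T) : Integrable (X p.1 p.2) P :=
    hX.integrable (Finset.mem_product.1 hp).1 (Finset.mem_product.1 hp).2
  refine (condExp_finsetSum hint (ℱ t)).symm.trans (condExp_congr_ae ?_)
  filter_upwards [hX.2] with ω hω
  rw [Finset.sum_apply, Finset.sum_product, hω]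

theorem utilSum_le_condExp [IsFiniteMeasure P] (hu : ∀ i s, IsConcaveUtility (u i s))
    (hX : IsDiv P ℱ n t T Z X) : utilSum P ℱ u n t T X ≤ᵐ[P] P[Z | ℱ t] :=
  (utilSum_le_utilSum (v := fun _ _ => id)
    (fun i hi s hs => hX.integrable_comp (hu i s).monotone hi hs)
    (fun _ hi _ hs => hX.integrable hi hs)
    fun i _ s _ => .of_forall fun _ => (hu i s).le_self _).trans_eq
    (utilSum_id_ae_eq_condExp hX)

theorem smul_utilSum_add_le [IsFiniteMeasure P] (hu : ∀ i s, IsConcaveUtility (u i s))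
    (hX : IsDiv P ℱ n t T Z X) (hY : IsDiv P ℱ n t T W Y) {a b : ℝ} (ha : 0 ≤ a) (hb : 0 ≤ b)
    (hab : a + b = 1) :
    a • utilSum P ℱ u n t T X + b • utilSum P ℱ u n t T Y ≤ᵐ[P]
      utilSum P ℱ u n t T (a • X + b • Y) := by
  simp only [utilSum_eq_sum_product, Finset.smul_sum, ← Finset.sum_add_distrib]
  refine eventuallyLE_sum fun p hp => ?_
  obtain ⟨hi, hs⟩ := Finset.mem_product.1 hp
  have hmono := (hu p.1 p.2).monotone
  exact smul_condExp_comp_add_le (hu p.1 p.2).concaveOn ha hb hab (hX.integrable_comp hmono hi hs)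
    (hY.integrable_comp hmono hi hs)
    (((hX.smul a).add (hY.smul b)).integrable_comp hmono hi hs)

theorem utilSum_le_utilSum_add_single [IsFiniteMeasure P] (hn : 0 < n) (ht : t ≤ T)
    (hu : ∀ i s, Monotone (u i s)) (hX : IsDiv P ℱ n t T Z X) (hW : MeasBdd (ℱ T) W)
    (hW0 : 0 ≤ᵐ[P] W) :
    utilSum P ℱ u n t T X ≤ᵐ[P] utilSum P ℱ u n t T (X + Pi.single 1 (Pi.single T W)) := by
  refine utilSum_le_utilSum (fun i hi s hs => hX.integrable_comp (hu i s) hi hs)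
    (fun i hi s hs => (hX.add (isDiv_single hn ht hW)).integrable_comp (hu i s) hi hs)
    fun i _ s _ => ?_
  filter_upwards [hW0] with ω hω
  refine hu i s (le_add_of_nonneg_right ?_)
  obtain rfl | hi := eq_or_ne i 1
  · obtain rfl | hs := eq_or_ne s T
    · simpa only [Pi.single_eq_same, Pi.zero_apply] using hω
    · simp only [Pi.single_eq_same, Pi.single_eq_of_ne hs, Pi.zero_apply, le_refl]
  · simp only [Pi.single_eq_of_ne hi, Pi.zero_apply, le_refl]

theorem isConditionalUtility_of_isEssSupOf [IsFiniteMeasure P] (hn : 0 < n) (ht : t ≤ T)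
    (hu : ∀ i s, IsConcaveUtility (u i s)) {U : (Ω → ℝ) → Ω → ℝ}
    (hU : ∀ Z, MeasBdd (ℱ T) Z → IsEssSupOf P (attainableUtilities P ℱ u n t T Z) (U Z)) :
    IsConditionalUtility P (ℱ t) (ℱ T) U where
  mono W W' hW hW' hle := by
    refine (hU W hW).2 _ ?_
    rintro _ ⟨X, hX, rfl⟩
    have hdiv := hX.add (isDiv_single hn ht (hW'.sub hW))
    rw [add_sub_cancel] at hdiv
    refine (utilSum_le_utilSum_add_single hn ht (fun i s => (hu i s).monotone) hX
      (hW'.sub hW) ?_).trans ((hU W' hW').1 _ ⟨_, hdiv, rfl⟩)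
    filter_upwards [hle] with ω hω using sub_nonneg.2 hω
  concave Z W a b hZ hW ha hb hab := by
    refine (((hU Z hZ).smul ha).add ((hU W hW).smul hb)).2 _ ?_
    rintro _ ⟨_, ⟨_, ⟨X, hX, rfl⟩, rfl⟩, _, ⟨_, ⟨Y, hY, rfl⟩, rfl⟩, rfl⟩
    exact (smul_utilSum_add_le hu hX hY ha.le hb.le hab).trans
      ((hU _ ((hZ.smul a).add (hW.smul b))).1 _ ⟨_, (hX.smul a).add (hY.smul b), rfl⟩)
  le_condExp Z hZ := by
    refine (hU Z hZ).2 _ ?_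
    rintro _ ⟨X, hX, rfl⟩
    exact utilSum_le_condExp hu hX
  zero_le :=
    (hU 0 .zero).1 0 ⟨0, isDiv_zero, (utilSum_zero fun i s => (hu i s).zero).symm⟩

end

theorem indifference_premium_properties_general
    {m0 : MeasurableSpace Ω} (P : Measure Ω) [IsFiniteMeasure P]
    (ℱ : Filtration ℕ m0) {T n t : ℕ} (hn : 0 < n) (ht : t ≤ T)
    {u : ℕ → ℕ → ℝ → ℝ} (hu : ∀ i s, IsConcaveUtility (u i s)) {U H : (Ω → ℝ) → Ω → ℝ}
    (hU : ∀ Z, MeasBdd (ℱ T) Z → IsEssSupOf P (attainableUtilities P ℱ u n t T Z) (U Z))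
    (hH : IsIndifferencePremium P (ℱ t) (ℱ T) U H) :
    (∀ Z, MeasBdd (ℱ T) Z → ∃ V, MeasBdd (ℱ t) V ∧ H Z =ᵐ[P] V) ∧
    (H 0 =ᵐ[P] 0) ∧
    (∀ X Y, MeasBdd (ℱ T) X → MeasBdd (ℱ T) Y → Y ≤ᵐ[P] X → H Y ≤ᵐ[P] H X) ∧
    (∀ X Y, ∀ a : ℝ, MeasBdd (ℱ T) X → MeasBdd (ℱ T) Y → 0 < a → a < 1 →
      H (a • X + (1 - a) • Y) ≤ᵐ[P] a • H X + (1 - a) • H Y) ∧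
    (∀ Z, MeasBdd (ℱ T) Z → P[Z | ℱ t] ≤ᵐ[P] H Z) ∧
    (∀ Z C, MeasBdd (ℱ T) Z → MeasBdd (ℱ t) C → H (Z + C) =ᵐ[P] H Z + C) := by
  have hUt : IsConditionalUtility P (ℱ t) (ℱ T) U :=
    isConditionalUtility_of_isEssSupOf hn ht hu hU
  have htT : ℱ t ≤ ℱ T := ℱ.mono ht
  exact ⟨fun _ hZ => hH.exists_measBdd_ae_eq hUt htT (ℱ.le T) hZ,
    hH.zero hUt htT (ℱ.le T),
    fun _ _ hX hY hYX => hH.mono hUt htT hX hY hYX,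
    fun _ _ a hX hY ha ha1 => hH.convex hUt htT hX hY ha (sub_pos.2 ha1) (add_sub_cancel a 1),
    fun _ hZ => hH.condExp_le hUt htT (ℱ.le T) hZ,
    fun _ _ hZ hC => hH.add_right htT hZ hC⟩

/-- Proposition 2.7: the indifference premium `H_t` maps `L^∞_T` into
`L^∞_t`, vanishes at `0`, is monotone, convex, carries a risk loading and is
translation invariant. -/
theorem indifference_premium_properties
    {m0 : MeasurableSpace Ω} (P : Measure Ω) [IsProbabilityMeasure P]
    (ℱ : Filtration ℕ m0) (T n t : ℕ) (hT : 0 < T) (hn : 0 < n) (ht : t ≤ T)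
    (u u' : ℕ → ℕ → ℝ → ℝ) (hu : ∀ i s, IsUtility (u i s) (u' i s))
    (U : (Ω → ℝ) → Ω → ℝ)
    (hU : ∀ Z : Ω → ℝ, MeasBdd (ℱ T) Z →
      IsEssSupOf P
        {g | ∃ X : ℕ → ℕ → Ω → ℝ, IsDiv P ℱ n t T Z X ∧ g = utilSum P ℱ u n t T X}
        (U Z))
    (H : (Ω → ℝ) → Ω → ℝ)
    -- `H Z` is the essential infimum of all `K ∈ L^∞_t` with `U_t(K - Z) ≥ U_t(0)` a.s.:
    (hH : ∀ Z : Ω → ℝ, MeasBdd (ℱ T) Z →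
      IsEssInfOf P
        {K | MeasBdd (ℱ t) K ∧ U (fun _ => 0) ≤ᵐ[P] U (fun ω => K ω - Z ω)}
        (H Z)) :
    -- `H` maps `L^∞_T` into `L^∞_t`:
    (∀ Z : Ω → ℝ, MeasBdd (ℱ T) Z → ∃ V : Ω → ℝ, MeasBdd (ℱ t) V ∧ H Z =ᵐ[P] V) ∧
    -- `H_t(0) = 0` a.s.:
    (H (fun _ => 0) =ᵐ[P] fun _ => 0) ∧
    -- monotonicity:
    (∀ X Y : Ω → ℝ, MeasBdd (ℱ T) X → MeasBdd (ℱ T) Y → Y ≤ᵐ[P] X →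
      H Y ≤ᵐ[P] H X) ∧
    -- convexity:
    (∀ X Y : Ω → ℝ, ∀ a : ℝ, MeasBdd (ℱ T) X → MeasBdd (ℱ T) Y → 0 < a → a < 1 →
      H (fun ω => a * X ω + (1 - a) * Y ω) ≤ᵐ[P]
        fun ω => a * H X ω + (1 - a) * H Y ω) ∧
    -- risk loading:
    (∀ Z : Ω → ℝ, MeasBdd (ℱ T) Z → (P[Z | ℱ t]) ≤ᵐ[P] H Z) ∧
    -- translation invariance:
    (∀ Z C : Ω → ℝ, MeasBdd (ℱ T) Z → MeasBdd (ℱ t) C →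
      H (fun ω => Z ω + C ω) =ᵐ[P] fun ω => H Z ω + C ω) :=
  indifference_premium_properties_general P ℱ hn ht (fun i s => (hu i s).isConcaveUtility) hU hH
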